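/- Let m be a nonzero integer and n an integer, and let s, t be real numbers with s > 0, t > 1 and s + 2 < t + 1/t < s + 2 + 4/(s·g_{m-1}(s)²). Let U = (X'Y'⁻¹)^m (X'⁻¹Y')^m and U_* = (Y'X'⁻¹)^m (Y'⁻¹X')^m, and assume the relation U^n · X' = Y' · U^n holds. Then the (1,1)-entry of the matrix M = U_*^n · U^n equals (-f_m(s) + t·f_{m-1}(s)) / (-f_{m-1}(s) + t·f_m(s)) (the denominator being nonzero). -/

import Mathlib

/-- `fN m` is the polynomial `f_m` (for `m ≥ 0`), viewed as a function of a real variable. -/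
noncomputable def fN : ℕ → ℝ → ℝ
  | 0 => fun _ => 1
  | 1 => fun s => s + 1
  | n + 2 => fun s => (s + 2) * fN (n + 1) s - fN n s

/-- `gN m` is the polynomial `g_m` (for `m ≥ 0`), viewed as a function of a real variable. -/
noncomputable def gN : ℕ → ℝ → ℝ
  | 0 => fun _ => 1
  | 1 => fun s => s + 2
  | n + 2 => fun s => (s + 2) * gN (n + 1) s - gN n s

/-- The two-sided family `f_m`, `m ∈ ℤ`, with `f_{-m} = f_{m-1}` for `m ≥ 1`. -/
noncomputable def fZ : ℤ → ℝ → ℝ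
  | Int.ofNat n => fN n
  | Int.negSucc n => fN n

/-- The two-sided family `g_m`, `m ∈ ℤ`, with `g_{-1} = 0` and `g_{-m} = -g_{m-2}` for `m ≥ 2`. -/
noncomputable def gZ : ℤ → ℝ → ℝ
  | Int.ofNat n => gN n
  | Int.negSucc 0 => fun _ => 0
  | Int.negSucc (n + 1) => fun s => -(gN n s)

open Matrix

/-- The matrix `X' = [[√t, 0], [0, 1/√t]]`. -/
noncomputable def Xmat' (t : ℝ) : Matrix (Fin 2) (Fin 2) ℝ :=
  !![Real.sqrt t, 0; 0, 1 / Real.sqrt t]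

/-- The matrix `Y' = [[(t-s-1)/(√t-1/√t), s/(√t-1/√t)² - 1], [-s, (s+1-1/t)/(√t-1/√t)]]`. -/
noncomputable def Ymat' (s t : ℝ) : Matrix (Fin 2) (Fin 2) ℝ :=
  !![(t - s - 1) / (Real.sqrt t - 1 / Real.sqrt t),
     s / (Real.sqrt t - 1 / Real.sqrt t) ^ 2 - 1;
     -s, (s + 1 - 1 / t) / (Real.sqrt t - 1 / Real.sqrt t)]

theorem gZ_rec (k : ℤ) (s : ℝ) : gZ (k + 2) s = (s + 2) * gZ (k + 1) s - gZ k s := by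
  rcases k with k | k
  · rfl
  · rcases k with _ | _ | _ | k
    · change gN 1 s = (s + 2) * gN 0 s - 0
      simp [gN]
    · change gN 0 s = (s + 2) * 0 - (-(gN 0 s))
      simp [gN]
    · change 0 = (s + 2) * (-(gN 0 s)) - (-(gN 1 s))
      simp [gN]
    · change -(gN k s) = (s + 2) * (-(gN (k + 1) s)) - (-(gN (k + 2) s))
      simp only [gN]
      ring

theorem gZ_neg_one (s : ℝ) : gZ (-1) s = 0 := rfl
theorem gZ_zero (s : ℝ) : gZ 0 s = 1 := rfl
theorem gZ_neg_two (s : ℝ) : gZ (-2) s = -1 := rfl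

theorem fZ_rec (k : ℤ) (s : ℝ) : fZ (k + 2) s = (s + 2) * fZ (k + 1) s - fZ k s := by
  rcases k with k | k
  · rfl
  · rcases k with _ | _ | k
    · change fN 1 s = (s + 2) * fN 0 s - fN 0 s
      simp [fN]; ring
    · change fN 0 s = (s + 2) * fN 0 s - fN 1 s
      simp [fN]; norm_num
    · change fN k s = (s + 2) * (fN (k + 1) s) - fN (k + 2) s
      simp only [fN]
      ring

theorem fZ_eq (s : ℝ) (k : ℤ) : fZ k s = gZ k s - gZ (k - 1) s ∧
    fZ (k - 1) s = gZ (k - 1) s - gZ (k - 2) s := by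
  induction k using Int.induction_on with
  | zero =>
    change fN 0 s = gN 0 s - 0 ∧ fN 0 s = 0 - (-(gN 0 s))
    simp [fN, gN]
  | succ i ih =>
    have h1 := fZ_rec (i - 1) s
    have h2 := gZ_rec (i - 1) s
    have h3 := gZ_rec (i - 2) s
    rw [show (i : ℤ) + 1 - 2 = i - 1 by ring, show (i : ℤ) + 1 - 1 = i by ring]
    rw [show (i : ℤ) - 1 + 2 = i + 1 by ring, show (i : ℤ) - 1 + 1 = i by ring] at h1 h2
    rw [show (i : ℤ) - 2 + 2 = i by ring, show (i : ℤ) - 2 + 1 = i - 1 by ring] at h3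
    refine ⟨?_, ih.1⟩
    rw [h1, h2, ih.1, ih.2]
    linear_combination h3
  | pred i ih =>
    generalize -(i : ℤ) = j at *
    have h1 := fZ_rec (j - 2) s
    have h2 := gZ_rec (j - 2) s
    have h3 := gZ_rec (j - 3) s
    rw [show j - 1 - 2 = j - 3 by ring, show j - 1 - 1 = j - 2 by ring]
    rw [show j - 2 + 2 = j by ring, show j - 2 + 1 = j - 1 by ring] at h1 h2
    rw [show j - 3 + 2 = j - 1 by ring, show j - 3 + 1 = j - 2 by ring] at h3
    refine ⟨ih.2, ?_⟩
    rw [ih.1, ih.2] at h1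
    linear_combination h1 - h2 + h3

theorem gN_pos (s : ℝ) (hs : 0 < s) (k : ℕ) : 0 < gN k s ∧ gN k s < gN (k + 1) s := by
  induction k with
  | zero => simp only [gN]; constructor <;> linarith
  | succ k ih =>
    refine ⟨ih.1.trans ih.2, ?_⟩
    simp only [gN]
    nlinarith [ih.1, ih.2, mul_pos hs (ih.1.trans ih.2)]

theorem gZ_ne (s : ℝ) (hs : 0 < s) (k : ℤ) (hk : k ≠ -1) : gZ k s ≠ 0 := by
  rcases k with k | k
  · exact (gN_pos s hs k).1.ne'
  · rcases k with _ | k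
    · exact absurd rfl hk
    · exact neg_ne_zero.mpr (gN_pos s hs k).1.ne'

theorem fN_pos (s t : ℝ) (hs : 0 < s) (ht : 1 < t) (h1 : s + 2 < t + 1 / t) (k : ℕ) :
    0 < fN k s ∧ fN k s < fN (k + 1) s ∧ fN (k + 1) s < t * fN k s := by
  have ht0 : 0 < t := by linarith
  have h1' : (s + 2) * t < t * t + 1 := by
    have := mul_lt_mul_of_pos_right h1 ht0
    rwa [add_mul t, one_div, inv_mul_cancel₀ ht0.ne'] at this
  induction k with
  | zero =>
    simp only [fN]
    refine ⟨one_pos, by linarith, ?_⟩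
    by_contra h
    nlinarith
  | succ k ih =>
    obtain ⟨ha, hb, hc⟩ := ih
    have hp := ha.trans hb
    refine ⟨hp, ?_, ?_⟩
    · simp only [fN]
      nlinarith [mul_pos hs hp]
    · simp only [fN]
      have := mul_lt_mul_of_pos_right h1' hp
      refine lt_of_mul_lt_mul_left (a := t) ?_ ht0.le
      nlinarith

theorem den_ne (s t : ℝ) (hs : 0 < s) (ht : 1 < t) (h1 : s + 2 < t + 1 / t) (k : ℤ) :
    -fZ (k - 1) s + t * fZ k s ≠ 0 := by
  rcases k with k | k
  · rcases k with _ | k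
    · change -fN 0 s + t * fN 0 s ≠ 0
      simp only [fN]
      intro h; linarith
    · have h : fZ (Int.ofNat (k + 1) - 1) s = fN k s := by
        rw [show Int.ofNat (k + 1) - 1 = Int.ofNat k by simp]
        rfl
      rw [h]
      change -fN k s + t * fN (k + 1) s ≠ 0
      obtain ⟨ha, hb, hc⟩ := fN_pos s t hs ht h1 k
      intro h
      nlinarith
  · change -fN (k + 1) s + t * fN k s ≠ 0
    obtain ⟨ha, hb, hc⟩ := fN_pos s t hs ht h1 k
    intro h
    linarith

theorem zpow_formula (s : ℝ) (A : Matrix (Fin 2) (Fin 2) ℝ) (hd : A.det = 1)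
    (htr : A.trace = s + 2) (k : ℤ) :
    A ^ k = gZ (k - 1) s • A - gZ (k - 2) s • (1 : Matrix (Fin 2) (Fin 2) ℝ) := by
  have hu : IsUnit A.det := by rw [hd]; exact isUnit_one
  rw [Matrix.det_fin_two] at hd
  rw [Matrix.trace_fin_two] at htr
  have hsq : A * A = (s + 2) • A - 1 := by
    rw [← htr]
    ext i j
    fin_cases i <;> fin_cases j <;> simp [Matrix.mul_apply, Fin.sum_univ_two] <;>
      first | ring1 | linear_combination -hd
  have hinv : A⁻¹ = (s + 2) • 1 - A := by
    apply Matrix.inv_eq_right_inv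
    rw [mul_sub, hsq]
    simp
  induction k using Int.induction_on with
  | zero => simp [gZ_neg_one, gZ_neg_two]
  | succ i ih =>
    rw [Matrix.zpow_add_one hu, ih, sub_mul, smul_mul_assoc, hsq, smul_mul_assoc, one_mul]
    have h3 := gZ_rec (i - 2) s
    rw [show (i : ℤ) - 2 + 2 = i by ring, show (i : ℤ) - 2 + 1 = i - 1 by ring] at h3
    rw [show (i : ℤ) + 1 - 2 = i - 1 by ring, show (i : ℤ) + 1 - 1 = i by ring, h3]
    module
  | pred i ih =>
    generalize -(i : ℤ) = j at *
    rw [Matrix.zpow_sub_one hu, ih, hinv, sub_mul, smul_mul_assoc, mul_sub, hsq, smul_mul_assoc,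
      one_mul]
    have h3 := gZ_rec (j - 3) s
    rw [show j - 3 + 2 = j - 1 by ring, show j - 3 + 1 = j - 2 by ring] at h3
    rw [show j - 1 - 2 = j - 3 by ring, show j - 1 - 1 = j - 2 by ring, 
      show gZ (j - 3) s = (s + 2) * gZ (j - 2) s - gZ (j - 1) s by linarith]
    simp only [mul_smul_comm, mul_one]
    module

theorem semiconj_inv (P A B : Matrix (Fin 2) (Fin 2) ℝ) (hA : IsUnit A.det) (hB : IsUnit B.det)
    (h : SemiconjBy P A B) : SemiconjBy P A⁻¹ B⁻¹ := by
  have := Matrix.SemiconjBy.zpow_right hA hB h (-1)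
  simpa [Matrix.zpow_neg_one] using this

theorem star_semiconj (P X Y : Matrix (Fin 2) (Fin 2) ℝ) (hX : IsUnit X.det) (hY : IsUnit Y.det)
    (h1 : SemiconjBy P Xᵀ X) (h2 : SemiconjBy P Yᵀ Y) (m n : ℤ) :
    SemiconjBy P ((((X * Y⁻¹) ^ m * (X⁻¹ * Y) ^ m) ^ n)ᵀ)
      (((Y * X⁻¹) ^ m * (Y⁻¹ * X) ^ m) ^ n) := by
  have hXi : IsUnit (X⁻¹).det := by rw [Matrix.det_nonsing_inv]; exact hX.ringInverse
  have hYi : IsUnit (Y⁻¹).det := by rw [Matrix.det_nonsing_inv]; exact hY.ringInverse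
  have hXt : IsUnit (Xᵀ).det := by rwa [Matrix.det_transpose]
  have hYt : IsUnit (Yᵀ).det := by rwa [Matrix.det_transpose]
  have hXit : IsUnit ((Xᵀ)⁻¹).det := by rw [Matrix.det_nonsing_inv]; exact hXt.ringInverse
  have hYit : IsUnit ((Yᵀ)⁻¹).det := by rw [Matrix.det_nonsing_inv]; exact hYt.ringInverse
  have u : ∀ {A B : Matrix (Fin 2) (Fin 2) ℝ}, IsUnit A.det → IsUnit B.det → IsUnit (A * B).det :=
    fun ha hb => by rw [Matrix.det_mul]; exact ha.mul hb
  have uz : ∀ {A : Matrix (Fin 2) (Fin 2) ℝ} (k : ℤ), IsUnit A.det → IsUnit (A ^ k).det :=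
    fun k ha => ha.det_zpow k
  simp only [Matrix.transpose_zpow, Matrix.transpose_mul, Matrix.transpose_nonsing_inv]
  have i1 := semiconj_inv P _ _ hXt hX h1
  have i2 := semiconj_inv P _ _ hYt hY h2
  refine Matrix.SemiconjBy.zpow_right (u (uz _ (u hYt hXit)) (uz _ (u hYit hXt)))
    (u (uz _ (u hY hXi)) (uz _ (u hYi hX))) ?_ n
  exact (Matrix.SemiconjBy.zpow_right (u hYt hXit) (u hY hXi) (h2.mul_right i1) m).mul_right
    (Matrix.SemiconjBy.zpow_right (u hYit hXt) (u hYi hX) (i2.mul_right h1) m)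

theorem det_zpow_one (A : Matrix (Fin 2) (Fin 2) ℝ) (hA : A.det = 1) (k : ℤ) :
    (A ^ k).det = 1 := by
  rcases k with k | k
  · simp [hA]
  · rw [zpow_negSucc, Matrix.det_nonsing_inv, Matrix.det_pow, hA]
    simp

/-- If the assignment `x ↦ X'`, `y ↦ Y'` satisfies the knot-group relation
`U^n X' = Y' U^n`, then the `(1,1)`-entry of the image `M = U_*^n U^n` of the longitude
equals `(-f_m + t f_{m-1})/(-f_{m-1} + t f_m)`, the denominator being nonzero. -/
theorem longitude_entry (m : ℤ) (hm : m ≠ 0) (n : ℤ) (s t : ℝ) (hs : 0 < s) (ht : 1 < t)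
    (h1 : s + 2 < t + 1 / t) (h2 : t + 1 / t < s + 2 + 4 / (s * gZ (m - 1) s ^ 2))
    (hrel : ((Xmat' t * (Ymat' s t)⁻¹) ^ m * ((Xmat' t)⁻¹ * Ymat' s t) ^ m) ^ n * Xmat' t =
      Ymat' s t * ((Xmat' t * (Ymat' s t)⁻¹) ^ m * ((Xmat' t)⁻¹ * Ymat' s t) ^ m) ^ n) :
    (((Ymat' s t * (Xmat' t)⁻¹) ^ m * ((Ymat' s t)⁻¹ * Xmat' t) ^ m) ^ n *
        ((Xmat' t * (Ymat' s t)⁻¹) ^ m * ((Xmat' t)⁻¹ * Ymat' s t) ^ m) ^ n) 0 0 =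
      (-fZ m s + t * fZ (m - 1) s) / (-fZ (m - 1) s + t * fZ m s) ∧
    -fZ (m - 1) s + t * fZ m s ≠ 0 := by
  have hden := den_ne s t hs ht h1 m
  refine ⟨?_, hden⟩
  have ht0 : 0 < t := by linarith
  obtain ⟨a, ha⟩ : ∃ a, a = Real.sqrt t := ⟨_, rfl⟩
  have ha0 : 0 < a := by rw [ha]; exact Real.sqrt_pos.mpr ht0
  have hat : t = a ^ 2 := by rw [ha, Real.sq_sqrt ht0.le]
  obtain ⟨τ, hτ⟩ : ∃ τ, τ = a - 1 / a := ⟨_, rfl⟩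
  have haτ : a * τ = t - 1 := by rw [hτ, hat]; field_simp
  have hτ0 : 0 < τ := by
    by_contra h
    nlinarith
  have hτ2 : τ ^ 2 = t + 1 / t - 2 := by rw [hτ, hat]; field_simp; ring
  have hτs : 0 < τ ^ 2 - s := by rw [hτ2]; linarith
  obtain ⟨y11, hy11⟩ : ∃ y, y = (t - s - 1) / τ := ⟨_, rfl⟩
  obtain ⟨y12, hy12⟩ : ∃ y, y = s / τ ^ 2 - 1 := ⟨_, rfl⟩
  obtain ⟨y22, hy22⟩ : ∃ y, y = (s + 1 - 1 / t) / τ := ⟨_, rfl⟩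
  have hX : Xmat' t = !![a, 0; 0, 1 / a] := by rw [Xmat', ← ha]
  have hY : Ymat' s t = !![y11, y12; -s, y22] := by rw [Ymat', ← ha, ← hτ, hy11, hy12, hy22]
  have e11 : τ * y11 = t - s - 1 := by rw [hy11]; field_simp
  have e12 : τ ^ 2 * y12 = s - τ ^ 2 := by rw [hy12]; field_simp
  have e22 : t * (τ * y22) = (s + 1) * t - 1 := by rw [hy22]; field_simp
  have e2 : t * τ ^ 2 = t ^ 2 + 1 - 2 * t := by rw [hτ2]; field_simp
  have hdY : y11 * y22 + s * y12 = 1 := by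
    have : t * τ ^ 2 * (y11 * y22 + s * y12) = t * τ ^ 2 * 1 := by
      linear_combination (t * τ * y22) * e11 + (t - s - 1) * e22 + s * t * e12 - (s + 1) * e2
    exact mul_left_cancel₀ (by positivity) this
  have hy12n : y12 ≠ 0 := by
    intro h
    rw [h] at e12
    linarith
  have hdetX : (Xmat' t).det = 1 := by rw [hX]; simp [Matrix.det_fin_two, ha0.ne']
  have hdetY : (Ymat' s t).det = 1 := by
    rw [hY]; simp [Matrix.det_fin_two]; linear_combination hdY
  have hXi : (Xmat' t)⁻¹ = !![1 / a, 0; 0, a] := by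
    apply Matrix.inv_eq_right_inv
    rw [hX]
    ext i j
    fin_cases i <;> fin_cases j <;> simp [ha0.ne']
  have hYi : (Ymat' s t)⁻¹ = !![y22, -y12; s, y11] := by
    apply Matrix.inv_eq_right_inv
    rw [hY]
    ext i j
    fin_cases i <;> fin_cases j <;> simp <;>
      first | ring1 | linear_combination hdY
  have huX : IsUnit (Xmat' t).det := by rw [hdetX]; exact isUnit_one
  have huY : IsUnit (Ymat' s t).det := by rw [hdetY]; exact isUnit_one
  -- the symmetry
  have hstar := star_semiconj !![y12, 0; 0, -s] (Xmat' t) (Ymat' s t) huX huY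
    (by rw [hX, SemiconjBy]; ext i j; fin_cases i <;> fin_cases j <;>
      simp [Matrix.mul_apply, Fin.sum_univ_two] <;> ring)
    (by rw [hY, SemiconjBy]; ext i j; fin_cases i <;> fin_cases j <;>
      simp [Matrix.mul_apply, Fin.sum_univ_two] <;> ring) m n
  -- the matrix U
  have hA : Xmat' t * (Ymat' s t)⁻¹ = !![a * y22, -(a * y12); s / a, y11 / a] := by
    rw [hX, hYi]
    ext i j
    fin_cases i <;> fin_cases j <;> simp <;> ring
  have hB : (Xmat' t)⁻¹ * Ymat' s t = !![y11 / a, y12 / a; -(a * s), a * y22] := by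
    rw [hXi, hY]
    ext i j
    fin_cases i <;> fin_cases j <;> simp <;> ring
  have hdA : (Xmat' t * (Ymat' s t)⁻¹).det = 1 := by
    rw [Matrix.det_mul, Matrix.det_nonsing_inv, hdetX, hdetY]; simp
  have hdB : ((Xmat' t)⁻¹ * Ymat' s t).det = 1 := by
    rw [Matrix.det_mul, Matrix.det_nonsing_inv, hdetX, hdetY]; simp
  have q22 : (t - 1) * (a * y22) = (s + 1) * t - 1 := by
    rw [← e22, ← haτ, hat]; ring
  have q11 : (t - 1) * (y11 / a) = t - s - 1 := by
    rw [← e11, ← haτ]; field_simp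
  have htrace : a * y22 + y11 / a = s + 2 := by
    have : (t - 1) * (a * y22 + y11 / a) = (t - 1) * (s + 2) := by
      linear_combination q22 + q11
    exact mul_left_cancel₀ (by linarith) this
  have htA : (Xmat' t * (Ymat' s t)⁻¹).trace = s + 2 := by
    rw [hA, Matrix.trace_fin_two]; simpa using htrace
  have htB : ((Xmat' t)⁻¹ * Ymat' s t).trace = s + 2 := by
    rw [hB, Matrix.trace_fin_two]; simp; linarith
  have hpA := zpow_formula s _ hdA htA m
  have hpB := zpow_formula s _ hdB htB m
  have hg := gZ_ne s hs (m - 1) (by omega)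
  obtain ⟨hf1, hf2⟩ := fZ_eq s m
  have hgr := gZ_rec (m - 2) s
  rw [show m - 2 + 2 = m by ring, show m - 2 + 1 = m - 1 by ring] at hgr
  obtain ⟨U, hU⟩ : ∃ U, U = (Xmat' t * (Ymat' s t)⁻¹) ^ m * ((Xmat' t)⁻¹ * Ymat' s t) ^ m :=
    ⟨_, rfl⟩
  have hdU : U.det = 1 := by
    rw [hU, Matrix.det_mul, det_zpow_one _ hdA, det_zpow_one _ hdB, one_mul]
  have hU12 : (t - 1) * U 0 1 =
      -(y12 * τ * gZ (m - 1) s) * (-fZ (m - 1) s + t * fZ m s) := by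
    rw [hU, hpA, hpB, hA, hB, hf1, hf2, hgr]
    simp [Matrix.mul_apply, Fin.sum_univ_two]
    rw [hτ]
    generalize gZ (m - 1) s = g at *
    generalize gZ (m - 2) s = g' at *
    linear_combination (-(g ^ 2 * y12 * (a - 1 / a))) * q22
  have hU21 : (t - 1) * U 1 0 =
      -(s * τ * gZ (m - 1) s) * (-fZ m s + t * fZ (m - 1) s) := by
    rw [hU, hpA, hpB, hA, hB, hf1, hf2, hgr]
    simp [Matrix.mul_apply, Fin.sum_univ_two]
    rw [hτ]
    generalize gZ (m - 1) s = g at *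
    generalize gZ (m - 2) s = g' at *
    linear_combination (-(g ^ 2 * s * (a - 1 / a))) * q11
  rw [← hU] at hrel hstar ⊢
  have hcomm : U ^ n * U = U * U ^ n := by
    have huU : IsUnit U.det := by rw [hdU]; exact isUnit_one
    rw [← Matrix.zpow_add_one huU, add_comm, Matrix.zpow_one_add huU]
  have hdW : (U ^ n).det = 1 := det_zpow_one _ hdU n
  generalize ((Ymat' s t * (Xmat' t)⁻¹) ^ m * ((Ymat' s t)⁻¹ * Xmat' t) ^ m) ^ n = V at *
  generalize U ^ n = W at *
  rw [Matrix.det_fin_two] at hdW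
  rw [hX, hY] at hrel
  rw [SemiconjBy] at hstar
  have c00 := congrFun (congrFun hcomm 0) 0
  have r10 := congrFun (congrFun hrel 1) 0
  have r11 := congrFun (congrFun hrel 1) 1
  have v00 := congrFun (congrFun hstar 0) 0
  have v01 := congrFun (congrFun hstar 0) 1
  simp [Matrix.mul_apply, Fin.sum_univ_two] at c00 r10 r11 v00 v01
  rw [Matrix.mul_apply, Fin.sum_univ_two, eq_div_iff hden]
  have d1 : y22 - a = τ * y12 := by
    have : t * τ * (y22 - a) = t * τ * (τ * y12) := by
      linear_combination e22 - t * e12 - t * haτ + e2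
    exact mul_left_cancel₀ (by positivity) this
  have d2 : τ * (y22 - a⁻¹) = s := by
    have : t * (τ * (y22 - a⁻¹)) = t * s := by
      have h : t * (τ * a⁻¹) = t - 1 := by rw [← haτ, hat]; field_simp
      linear_combination e22 - h
    exact mul_left_cancel₀ (by positivity) this
  have w1 : τ * y12 * W 1 0 = s * W 0 0 := by linear_combination -r10 - W 1 0 * d1
  have w2 : W 1 1 = τ * W 0 1 := by
    have : s * W 1 1 = s * (τ * W 0 1) := by
      linear_combination - τ * r11 - W 1 1 * d2
    exact mul_left_cancel₀ hs.ne' this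
  have w3 : W 0 1 * (τ * W 0 0 - W 1 0) = 1 := by linear_combination hdW - W 0 0 * w2
  have hw : W 0 1 ≠ 0 := by
    intro h
    rw [h] at w3
    simp at w3
  have key : s * W 0 1 * (-fZ m s + t * fZ (m - 1) s) =
      y12 * W 1 0 * (-fZ (m - 1) s + t * fZ m s) := by
    have c : W 0 1 * U 1 0 = U 0 1 * W 1 0 := by linear_combination c00
    have : (τ * gZ (m - 1) s) * (s * W 0 1 * (-fZ m s + t * fZ (m - 1) s)) =
        (τ * gZ (m - 1) s) * (y12 * W 1 0 * (-fZ (m - 1) s + t * fZ m s)) := by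
      linear_combination -(t - 1) * c + W 0 1 * hU21 - W 1 0 * hU12
    exact mul_left_cancel₀ (mul_ne_zero hτ0.ne' hg) this
  have v0 : V 0 0 = W 0 0 := by
    have : y12 * V 0 0 = y12 * W 0 0 := by linear_combination -v00
    exact mul_left_cancel₀ hy12n this
  have v1 : s * V 0 1 = -(y12 * W 1 0) := by linear_combination v01
  refine mul_left_cancel₀ (mul_ne_zero hs.ne' hw) ?_
  rw [key, v0]
  generalize -fZ (m - 1) s + t * fZ m s = D
  linear_combination D * W 0 1 * W 1 0 * v1 - D * W 0 1 * W 0 0 * w1 + D * y12 * W 1 0 * w3
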